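/- arXiv:1310.5829 — 2 statements merged into one kernel-verified Lean document; each statement's English description precedes it below -/
import Mathlib

section
/- The set M₃ is I-dense in M₄: for every (μ,Q) ∈ M₄ with I(μ,Q) < +∞ there exists a sequence {(μ_n,Q_n)} ⊂ M₃ such that (μ_n,Q_n) → (μ,Q) and I(μ_n,Q_n) → I(μ,Q). -/
open MeasureTheory ProbabilityTheory Filter Topology Set ENNReal

noncomputable section

/-- The data of transition rates `c(x,dy) = r(x) p(x,y) λ(dy)` on a state space `E`,
satisfying Assumption 1.1 (i)-(iii): `r` is continuous and nonnegative, `λ` is a probability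
measure which is strictly positive on open sets, `p` is a strictly positive continuous
transition density, and `1/r` is `λ`-integrable. -/
structure ChainSetting (E : Type*) [MeasurableSpace E] [TopologicalSpace E] where
  r : E → ℝ
  r_cont : Continuous r
  r_nonneg : ∀ x, 0 ≤ r x
  lam : Measure E
  lam_prob : IsProbabilityMeasure lam
  lam_pos : ∀ U : Set E, IsOpen U → U.Nonempty → 0 < lam U
  p : E → E → ℝ
  p_cont : Continuous fun z : E × E => p z.1 z.2
  p_pos : ∀ x y, 0 < p x y
  p_int : ∀ x, ∫ y, p x y ∂lam = 1
  inv_r_int : ∫⁻ x, (ENNReal.ofReal (r x))⁻¹ ∂lam ≠ ∞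

namespace ChainSetting

variable {E : Type*} [MeasurableSpace E] [TopologicalSpace E] (S : ChainSetting E)

/-- The (closed) set `E₀ = {x : r(x) = 0}` of absorbing states. -/
def E0 : Set E := {x | S.r x = 0}

/-- The skeleton transition probability `p(x,dy) = p(x,y) λ(dy)`. -/
def skel (x : E) : Measure E := S.lam.withDensity fun y => ENNReal.ofReal (S.p x y)

/-- The jump rates `c(x,dy) = r(x) p(x,y) λ(dy)`. -/
def cMeas (x : E) : Measure E := S.lam.withDensity fun y => ENNReal.ofReal (S.r x * S.p x y)

/-- The measure `μ(dx) c(x,dy)` on `E × E`. -/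
def muc (μ : Measure E) : Measure (E × E) :=
  (μ.prod S.lam).withDensity fun z => ENNReal.ofReal (S.r z.1 * S.p z.1 z.2)

/-- The invariant probability `π(dx) = π₀(1/r)⁻¹ π₀(dx)/r(x)` of the continuous-time chain,
built from the invariant probability `π₀` of the skeleton, cf. (1.2). -/
def piMeas (π₀ : Measure E) : Measure E :=
  (∫⁻ x, (ENNReal.ofReal (S.r x))⁻¹ ∂π₀)⁻¹ •
    π₀.withDensity fun x => (ENNReal.ofReal (S.r x))⁻¹

/-- Assumption 1.1 (iv): with `A_δ = {r < δ}`, there is a sequence `δ_n → 0` with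
`λ(A_{2δ_n}) ≤ C λ(A_{2δ_n} \ A_{δ_n})`. -/
def CondIV : Prop :=
  ∃ δ : ℕ → ℝ, (∀ n, 0 < δ n) ∧ Tendsto δ atTop (𝓝 0) ∧
    ∃ C : ℝ≥0∞, C ≠ ∞ ∧ ∀ n,
      S.lam {x | S.r x < 2 * δ n} ≤ C * S.lam ({x | S.r x < 2 * δ n} \ {x | S.r x < δ n})

end ChainSetting

/-- The convex function `Ψ(a) = a log a - (a - 1)` (with `Ψ(0) = 1`), extended to `ℝ≥0∞`. -/
def PsiE (a : ℝ≥0∞) : ℝ≥0∞ :=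
  if a = ∞ then ∞ else ENNReal.ofReal (a.toReal * Real.log a.toReal - a.toReal + 1)

open Classical in
/-- The joint rate functional `I(μ,Q)` of (2.3):
`I(μ,Q) = ∫∫ μ(dx)c(x,dy) Ψ(dQ/(μ(dx)c(x,dy)))` if the two marginals of `Q` coincide and
`Q ≪ μ(dx)c(x,dy)`, and `+∞` otherwise. -/
def ChainSetting.rateI0 {E : Type*} [MeasurableSpace E] [TopologicalSpace E]
    (S : ChainSetting E) (μ : Measure E) (Q : Measure (E × E)) : ℝ≥0∞ :=
  if Q.fst = Q.snd ∧ Q ≪ S.muc μ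
  then ∫⁻ z, PsiE (Q.rnDeriv (S.muc μ) z) ∂(S.muc μ)
  else ∞

/-- The joint rate functional `I` on `M₁(E) × M₊(E×E)`. -/
def ChainSetting.rateI {E : Type*} [MeasurableSpace E] [TopologicalSpace E]
    (S : ChainSetting E) (q : ProbabilityMeasure E × FiniteMeasure (E × E)) : ℝ≥0∞ :=
  S.rateI0 (q.1 : Measure E) (q.2 : Measure (E × E))

/-- The (topological) support of a measure: points all of whose open neighbourhoods have
positive measure. -/
def msupp {α : Type*} [TopologicalSpace α] {m : MeasurableSpace α} (μ : Measure α) : Set α :=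
  {x | ∀ U : Set α, IsOpen U → x ∈ U → 0 < μ U}

open Classical in
/-- Bundle a measure as a probability measure (junk value if it is not one). -/
def toPM {α : Type*} [MeasurableSpace α] [Nonempty α] (μ : Measure α) : ProbabilityMeasure α :=
  if h : IsProbabilityMeasure μ then ⟨μ, h⟩
  else ⟨Measure.dirac (Classical.arbitrary α), by infer_instance⟩

open Classical in
/-- Bundle a measure as a finite measure (junk value if it is not one). -/
def toFM {α : Type*} [MeasurableSpace α] (μ : Measure α) : FiniteMeasure α :=
  if h : IsFiniteMeasure μ then ⟨μ, h⟩ else 0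

/-- Membership in the set `M₃` of (5.9): `μ ≪ λ` and `Q ≪ λ×λ`. -/
def ChainSetting.MemM3 {E : Type*} [MeasurableSpace E] [TopologicalSpace E]
    (S : ChainSetting E) (μ : Measure E) (Q : Measure (E × E)) : Prop :=
  μ ≪ S.lam ∧ Q ≪ S.lam.prod S.lam

/-- Membership in the set `M₄` of (5.10): `μ ⊥ λ` and `Q = 0`. -/
def ChainSetting.MemM4 {E : Type*} [MeasurableSpace E] [TopologicalSpace E]
    (S : ChainSetting E) (μ : Measure E) (Q : Measure (E × E)) : Prop :=
  μ ⟂ₘ S.lam ∧ Q = 0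

variable {E : Type*} [MeasurableSpace E] [TopologicalSpace E] [PolishSpace E]
  [CompactSpace E] [BorelSpace E] [Nonempty E]

/-!
Average `λ` over small balls: `μₙ = ∫ μ(dx) λ(· | B(x, εₙ))` is absolutely continuous with respect
to `λ` and is obtained from `μ` by moving mass over distances less than `εₙ`, so `μₙ → μ` weakly.
Keep `Q = 0` along the sequence. Since `Ψ(0) = 1` and `p(x, ·)` is a probability density,
`I(ν, 0) = ∫ r dν`. To make these integrals converge as well, even for unbounded `r`, take the balls
in the metric `max (d(x, y), |r(x) - r(y)|)`: it induces the same topology and `r` is 1-Lipschitz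
for it, so that `∫ r dμₙ` and `∫ r dμ` differ by at most `εₙ`.
-/

section SmallDisplacement

variable {X Y : Type*} [MeasurableSpace X] [MeasurableSpace Y]

theorem lintegral_comp_le_lintegral_add {μ : Measure X} [IsProbabilityMeasure μ] {κ : Kernel X Y}
    [IsMarkovKernel κ] {f : X → ℝ≥0∞} {g : Y → ℝ≥0∞} {δ : ℝ≥0∞}
    (h : ∀ᵐ x ∂μ, ∀ᵐ y ∂κ x, g y ≤ f x + δ) :
    ∫⁻ y, g y ∂(κ ∘ₘ μ) ≤ ∫⁻ x, f x ∂μ + δ :=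
  calc ∫⁻ y, g y ∂(κ ∘ₘ μ) ≤ ∫⁻ x, ∫⁻ y, g y ∂κ x ∂μ := Measure.lintegral_bind_le _ _ _
    _ ≤ ∫⁻ x, ∫⁻ _, f x + δ ∂κ x ∂μ :=
      lintegral_mono_ae <| h.mono fun _ hx => lintegral_mono_ae hx
    _ = ∫⁻ x, f x ∂μ + δ := by
      simp [lintegral_add_right _ measurable_const]

theorem lintegral_le_lintegral_comp_add {μ : Measure X} [IsProbabilityMeasure μ] {κ : Kernel X Y}
    [IsMarkovKernel κ] {f : X → ℝ≥0∞} {g : Y → ℝ≥0∞} (hg : Measurable g) {δ : ℝ≥0∞}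
    (h : ∀ᵐ x ∂μ, ∀ᵐ y ∂κ x, f x ≤ g y + δ) :
    ∫⁻ x, f x ∂μ ≤ ∫⁻ y, g y ∂(κ ∘ₘ μ) + δ :=
  calc ∫⁻ x, f x ∂μ = ∫⁻ x, ∫⁻ _, f x ∂κ x ∂μ := by simp
    _ ≤ ∫⁻ x, ∫⁻ y, g y + δ ∂κ x ∂μ :=
      lintegral_mono_ae <| h.mono fun _ hx => lintegral_mono_ae hx
    _ = ∫⁻ y, g y ∂(κ ∘ₘ μ) + δ := by
      simp [lintegral_add_right _ measurable_const,
        Measure.lintegral_bind κ.aemeasurable hg.aemeasurable]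

variable [PseudoMetricSpace X] [OpensMeasurableSpace X]

theorem comp_apply_le_measure_thickening {μ : Measure X} {κ : Kernel X X}
    [IsMarkovKernel κ] {ε : ℝ} (hκ : ∀ x, ∀ᵐ y ∂κ x, dist y x < ε) {F : Set X}
    (hF : MeasurableSet F) : (κ ∘ₘ μ) F ≤ μ (Metric.thickening ε F) := by
  have hzero {x : X} (hx : x ∉ Metric.thickening ε F) : κ x F = 0 := by
    refine measure_eq_zero_iff_ae_notMem.2 ((hκ x).mono fun y hy hyF => hx ?_)
    exact Metric.mem_thickening_iff.2 ⟨y, hyF, dist_comm y x ▸ hy⟩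
  rw [Measure.bind_apply hF κ.aemeasurable,
    ← lintegral_indicator_one Metric.isOpen_thickening.measurableSet]
  refine lintegral_mono fun x => ?_
  by_cases hx : x ∈ Metric.thickening ε F
  · simpa [hx] using prob_le_one
  · simp [hx, hzero hx]

variable {ι : Type*} {L : Filter ι} {κ : ι → Kernel X X} [∀ i, IsMarkovKernel (κ i)] {ε : ι → ℝ}

theorem tendsto_lintegral_comp_of_lipschitzWith {μ : Measure X} [IsProbabilityMeasure μ]
    (hε : Tendsto ε L (𝓝 0)) (hκ : ∀ i x, ∀ᵐ y ∂κ i x, dist y x < ε i)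
    {f : X → ℝ} {K : NNReal} (hf : LipschitzWith K f) :
    Tendsto (fun i => ∫⁻ x, ENNReal.ofReal (f x) ∂(κ i ∘ₘ μ)) L
      (𝓝 (∫⁻ x, ENNReal.ofReal (f x) ∂μ)) := by
  have hδ : Tendsto (fun i => ENNReal.ofReal (K * ε i)) L (𝓝 0) := by
    simpa using ENNReal.tendsto_ofReal (hε.const_mul (K : ℝ))
  have ofReal_le {x y : X} {i : ι} (hxy : dist x y < ε i) :
      ENNReal.ofReal (f x) ≤ ENNReal.ofReal (f y) + ENNReal.ofReal (K * ε i) :=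
    (ENNReal.ofReal_le_ofReal <| (hf.le_add_mul x y).trans <| by gcongr).trans
      ENNReal.ofReal_add_le
  have upper (i) : ∫⁻ x, ENNReal.ofReal (f x) ∂(κ i ∘ₘ μ)
      ≤ ∫⁻ x, ENNReal.ofReal (f x) ∂μ + ENNReal.ofReal (K * ε i) :=
    lintegral_comp_le_lintegral_add <| ae_of_all _ fun x => (hκ i x).mono fun _ => ofReal_le
  have lower (i) : ∫⁻ x, ENNReal.ofReal (f x) ∂μ
      ≤ ∫⁻ x, ENNReal.ofReal (f x) ∂(κ i ∘ₘ μ) + ENNReal.ofReal (K * ε i) :=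
    lintegral_le_lintegral_comp_add hf.continuous.measurable.ennreal_ofReal <|
      ae_of_all _ fun x => (hκ i x).mono fun y hy => ofReal_le (dist_comm y x ▸ hy)
  refine tendsto_of_tendsto_of_tendsto_of_le_of_le ?_ ?_
    (fun i => tsub_le_iff_right.2 (lower i)) upper
  · simpa using ENNReal.Tendsto.sub tendsto_const_nhds hδ (.inr zero_ne_top)
  · simpa using tendsto_const_nhds.add hδ

theorem tendsto_comp_of_dist_lt [L.IsCountablyGenerated] (μ : ProbabilityMeasure X)
    (hε : Tendsto ε L (𝓝[>] 0)) (hκ : ∀ i x, ∀ᵐ y ∂κ i x, dist y x < ε i) :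
    Tendsto (β := ProbabilityMeasure X) (fun i => ⟨κ i ∘ₘ μ, inferInstance⟩) L (𝓝 μ) := by
  refine tendsto_of_forall_isClosed_limsup_le' fun F hF => ?_
  rcases L.eq_or_neBot with rfl | _
  · simp
  have hthick : Tendsto (fun i => (μ : Measure X) (Metric.thickening (ε i) F)) L
      (𝓝 ((μ : Measure X) F)) :=
    (tendsto_measure_thickening_of_isClosed ⟨1, one_pos, measure_ne_top _ _⟩ hF).comp hε
  exact (limsup_le_limsup <| .of_forall fun i =>
    comp_apply_le_measure_thickening (hκ i) hF.measurableSet).trans_eq hthick.limsup_eq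

end SmallDisplacement

section BallAverage

variable {X : Type*} [MeasurableSpace X] [PseudoMetricSpace X] [SecondCountableTopology X]
  [OpensMeasurableSpace X]

/-- The kernel which moves a point `x` to a `ν`-random point of the ball `B(x, ε)`. Composing a
measure with it makes the measure absolutely continuous with respect to `ν`. The kernel vanishes at
points whose ball has measure `0` or `∞`. -/
def ballAverage (ν : Measure X) [SFinite ν] (ε : ℝ) : Kernel X X where
  toFun x := ν[|Metric.ball x ε]
  measurable' := by
    have hball : MeasurableSet {z : X × X | dist z.2 z.1 < ε} :=
      (isOpen_lt (by fun_prop) (by fun_prop)).measurableSet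
    refine Measure.measurable_of_measurable_coe _ fun s hs => ?_
    simp_rw [cond_apply Metric.isOpen_ball.measurableSet]
    exact (measurable_measure_prodMk_left hball).inv.mul
      (measurable_measure_prodMk_left (hball.inter (measurable_snd hs)))

theorem isMarkovKernel_ballAverage (ν : Measure X) [IsFiniteMeasure ν] [ν.IsOpenPosMeasure]
    {ε : ℝ} (hε : 0 < ε) : IsMarkovKernel (ballAverage ν ε) :=
  ⟨fun x => cond_isProbabilityMeasure (Metric.measure_ball_pos ν x hε).ne'⟩

theorem ae_ballAverage_dist_lt (ν : Measure X) [SFinite ν] (ε : ℝ) (x : X) :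
    ∀ᵐ y ∂ballAverage ν ε x, dist y x < ε :=
  ae_cond_mem Metric.isOpen_ball.measurableSet

theorem ballAverage_comp_absolutelyContinuous (ν μ : Measure X) [SFinite ν] (ε : ℝ) :
    ballAverage ν ε ∘ₘ μ ≪ ν := by
  have h : ballAverage ν ε ∘ₘ μ ≪ Kernel.const X ν ∘ₘ μ :=
    Measure.AbsolutelyContinuous.comp_left μ (ae_of_all _ fun _ => cond_absolutelyContinuous)
  rw [Measure.const_comp] at h
  exact h.trans Measure.smul_absolutelyContinuous

end BallAverage

section Approximation

variable {X : Type*}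

theorem exists_pseudoMetricSpace_lipschitzWith_one [t : TopologicalSpace X]
    [TopologicalSpace.PseudoMetrizableSpace X] {f : X → ℝ} (hf : Continuous f) :
    ∃ m : PseudoMetricSpace X, m.toUniformSpace.toTopologicalSpace = t ∧ LipschitzWith 1 f := by
  let := TopologicalSpace.pseudoMetrizableSpacePseudoMetric X
  let m := (isEmbedding_graph hf).isInducing.comapPseudoMetricSpace
  exact ⟨m, rfl, LipschitzWith.mk_one fun _ _ => le_max_right _ _⟩

variable [MeasurableSpace X]

theorem exists_tendsto_absolutelyContinuous_of_lipschitzWith [PseudoMetricSpace X]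
    [SecondCountableTopology X] [OpensMeasurableSpace X] (ν : Measure X) [IsFiniteMeasure ν]
    [ν.IsOpenPosMeasure] (μ : ProbabilityMeasure X) {f : X → ℝ} {K : NNReal}
    (hf : LipschitzWith K f) :
    ∃ μs : ℕ → ProbabilityMeasure X, (∀ n, (μs n : Measure X) ≪ ν) ∧
      Tendsto μs atTop (𝓝 μ) ∧
      Tendsto (fun n => ∫⁻ x, ENNReal.ofReal (f x) ∂(μs n)) atTop
        (𝓝 (∫⁻ x, ENNReal.ofReal (f x) ∂μ)) := by
  let ε : ℕ → ℝ := fun n => 1 / (n + 1)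
  have hpos n : 0 < ε n := Nat.one_div_pos_of_nat
  have hε : Tendsto ε atTop (𝓝 0) := tendsto_one_div_add_atTop_nhds_zero_nat
  have hε' : Tendsto ε atTop (𝓝[>] 0) := tendsto_nhdsWithin_iff.2 ⟨hε, .of_forall hpos⟩
  have hmarkov n := isMarkovKernel_ballAverage ν (hpos n)
  have hdist n := ae_ballAverage_dist_lt ν (ε n)
  refine ⟨fun n => ⟨ballAverage ν (ε n) ∘ₘ μ, inferInstance⟩, ?_, ?_, ?_⟩
  · exact fun n => ballAverage_comp_absolutelyContinuous ν μ (ε n)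
  · exact tendsto_comp_of_dist_lt μ hε' hdist
  · exact tendsto_lintegral_comp_of_lipschitzWith hε hdist hf

theorem exists_tendsto_absolutelyContinuous [TopologicalSpace X]
    [TopologicalSpace.PseudoMetrizableSpace X] [SecondCountableTopology X] [OpensMeasurableSpace X]
    (ν : Measure X) [IsFiniteMeasure ν] [ν.IsOpenPosMeasure] (μ : ProbabilityMeasure X)
    {f : X → ℝ} (hf : Continuous f) :
    ∃ μs : ℕ → ProbabilityMeasure X, (∀ n, (μs n : Measure X) ≪ ν) ∧
      Tendsto μs atTop (𝓝 μ) ∧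
      Tendsto (fun n => ∫⁻ x, ENNReal.ofReal (f x) ∂(μs n)) atTop
        (𝓝 (∫⁻ x, ENNReal.ofReal (f x) ∂μ)) := by
  obtain ⟨m, rfl, hlip⟩ := exists_pseudoMetricSpace_lipschitzWith_one hf
  exact exists_tendsto_absolutelyContinuous_of_lipschitzWith ν μ hlip

end Approximation

theorem toPM_coe {α : Type*} [MeasurableSpace α] [Nonempty α] (μ : ProbabilityMeasure α) :
    toPM (μ : Measure α) = μ :=
  dif_pos μ.2

theorem PsiE_zero : PsiE 0 = 1 := by simp [PsiE]

namespace ChainSetting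

variable {X : Type*} [MeasurableSpace X] [TopologicalSpace X] (S : ChainSetting X)

instance : IsProbabilityMeasure S.lam := S.lam_prob

instance : S.lam.IsOpenPosMeasure := ⟨fun U hU hne => (S.lam_pos U hU hne).ne'⟩

theorem lintegral_p (x : X) : ∫⁻ y, ENNReal.ofReal (S.p x y) ∂S.lam = 1 := by
  rw [← ofReal_integral_eq_lintegral_ofReal (integrable_of_integral_eq_one (S.p_int x))
    (ae_of_all _ fun y => (S.p_pos x y).le), S.p_int, ofReal_one]

variable [SecondCountableTopology X] [OpensMeasurableSpace X]

theorem muc_univ (μ : Measure X) : S.muc μ univ = ∫⁻ x, ENNReal.ofReal (S.r x) ∂μ := by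
  have hmeas : Measurable fun z : X × X => ENNReal.ofReal (S.r z.1 * S.p z.1 z.2) :=
    ((S.r_cont.comp continuous_fst).mul S.p_cont).measurable.ennreal_ofReal
  rw [muc, withDensity_apply _ .univ, Measure.restrict_univ, lintegral_prod _ hmeas.aemeasurable]
  simp_rw [ofReal_mul (S.r_nonneg _), lintegral_const_mul' _ _ ofReal_ne_top, S.lintegral_p,
    mul_one]

theorem rateI0_zero (μ : Measure X) : S.rateI0 μ 0 = ∫⁻ x, ENNReal.ofReal (S.r x) ∂μ := by
  have hPsi : (fun z => PsiE ((0 : Measure (X × X)).rnDeriv (S.muc μ) z)) =ᵐ[S.muc μ] fun _ => 1 :=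
    (Measure.rnDeriv_zero _).mono fun z hz => by simp [hz, PsiE_zero]
  rw [rateI0, if_pos ⟨by simp [Measure.fst, Measure.snd], .zero _⟩, lintegral_congr_ae hPsi,
    lintegral_one, muc_univ]

end ChainSetting

theorem M3_Idense_in_M4_general {X : Type*} [MeasurableSpace X] [TopologicalSpace X]
    [TopologicalSpace.PseudoMetrizableSpace X] [SecondCountableTopology X] [OpensMeasurableSpace X]
    [Nonempty X] (S : ChainSetting X) (μ : Measure X) (hμ : IsProbabilityMeasure μ) :
    ∃ (μs : ℕ → Measure X) (Qs : ℕ → Measure (X × X)),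
      (∀ n, IsProbabilityMeasure (μs n)) ∧ (∀ n, IsFiniteMeasure (Qs n)) ∧
      (∀ n, S.MemM3 (μs n) (Qs n)) ∧
      Tendsto (fun n => ((toPM (μs n), toFM (Qs n)) :
          ProbabilityMeasure X × FiniteMeasure (X × X)))
        atTop (𝓝 (toPM μ, toFM 0)) ∧
      Tendsto (fun n => S.rateI0 (μs n) (Qs n)) atTop (𝓝 (S.rateI0 μ 0)) := by
  obtain ⟨μ, rfl⟩ : ∃ μ' : ProbabilityMeasure X, μ' = μ := ⟨⟨μ, hμ⟩, rfl⟩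
  obtain ⟨μs, hac, hweak, hrate⟩ := exists_tendsto_absolutelyContinuous S.lam μ S.r_cont
  refine ⟨fun n => μs n, fun _ => 0, fun n => inferInstance, fun _ => inferInstance,
    fun n => ⟨hac n, .zero _⟩, ?_, ?_⟩
  · simpa only [toPM_coe] using hweak.prodMk_nhds tendsto_const_nhds
  · simpa only [S.rateI0_zero] using hrate

/-- **Lemma 5.7**: the set `M₃` is `I`-dense in `M₄`. -/
theorem M3_Idense_in_M4 (S : ChainSetting E)
    (μ : Measure E) (hμ : IsProbabilityMeasure μ)
    (Q : Measure (E × E)) (hQ : IsFiniteMeasure Q)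
    (hmem : S.MemM4 μ Q)
    (hfin : S.rateI0 μ Q ≠ ∞) :
    ∃ (μs : ℕ → Measure E) (Qs : ℕ → Measure (E × E)),
      (∀ n, IsProbabilityMeasure (μs n)) ∧ (∀ n, IsFiniteMeasure (Qs n)) ∧
      (∀ n, S.MemM3 (μs n) (Qs n)) ∧
      Tendsto (fun n => ((toPM (μs n), toFM (Qs n)) :
          ProbabilityMeasure E × FiniteMeasure (E × E)))
        atTop (𝓝 (toPM μ, toFM Q)) ∧
      Tendsto (fun n => S.rateI0 (μs n) (Qs n)) atTop (𝓝 (S.rateI0 μ Q)) := by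
  obtain ⟨-, rfl⟩ := hmem
  exact M3_Idense_in_M4_general S μ hμ

end
end

section
/- Let Q^π(dx,dy) := π(dx)c(x,dy). Then Q^π has equal first and second marginals and I(π,Q^π) = 0; if ν is any probability on E supported on a subset of E₀ then I(ν,0) = 0; and the zero level set of I consists exactly of the convex combinations α(π,Q^π) + (1−α)(ν,0), α ∈ [0,1], with ν a probability supported on a subset of E₀. -/
/-!
Since `Ψ` vanishes only at `1`, `I(μ,Q) = 0` means that `Q = μ(dx)c(x,dy)` has equal marginals.
These marginals are `r μ` and its image under the skeleton kernel, so the condition says that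
`r μ` is invariant for the skeleton. Every `p(x,dy)` dominates `λ`, hence so does every nonzero
invariant measure. The positive and negative parts of the difference of two invariant measures
are invariant and mutually singular, so one of them vanishes, and `r μ` is a multiple of `π₀`.
Dividing by `r` off `E₀` shows that `μ` is there a multiple of `π`, while its restriction to `E₀`
is arbitrary and contributes nothing to `Q`.
-/

open MeasureTheory ProbabilityTheory Filter Topology Set ENNReal

noncomputable section

variable {E : Type*} [MeasurableSpace E] [TopologicalSpace E] [PolishSpace E]
  [CompactSpace E] [BorelSpace E] [Nonempty E]

section Measures

variable {X : Type*} [MeasurableSpace X] {μ ν : Measure X}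

lemma measure_le_sub_add (μ ν : Measure X) [IsFiniteMeasure μ] [IsFiniteMeasure ν] :
    μ ≤ μ - ν + ν := by
  obtain ⟨s, hs⟩ := exists_isHahnDecomposition μ ν
  have hle : μ.restrict s ≤ (μ - ν + ν).restrict s :=
    hs.le_on.trans (Measure.restrict_mono_measure (Measure.le_add_left le_rfl) s)
  have heq : μ.restrict sᶜ = (μ - ν + ν).restrict sᶜ := by
    rw [Measure.restrict_add,
      Measure.restrict_sub_eq_restrict_sub_restrict hs.measurableSet.compl,
      Measure.sub_add_cancel_of_le hs.ge_on_compl]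
  calc μ = μ.restrict s + μ.restrict sᶜ :=
        (Measure.restrict_add_restrict_compl hs.measurableSet).symm
    _ ≤ (μ - ν + ν).restrict s + (μ - ν + ν).restrict sᶜ := add_le_add hle heq.le
    _ = μ - ν + ν := Measure.restrict_add_restrict_compl hs.measurableSet

lemma withDensity_withDensity_inv {f : X → ℝ≥0∞} (hf : Measurable f)
    (hf_top : ∀ᵐ x ∂μ, f x ≠ ∞) :
    (μ.withDensity f).withDensity (fun x => (f x)⁻¹) = μ.restrict {x | f x ≠ 0} := by
  have hs : MeasurableSet {x | f x ≠ 0} := hf (measurableSet_singleton 0).compl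
  rw [← withDensity_mul _ hf hf.fun_inv, ← withDensity_indicator_one hs]
  refine withDensity_congr_ae ?_
  filter_upwards [hf_top] with x hx
  by_cases h0 : f x = 0
  · simp [h0]
  · simp [h0, ENNReal.mul_inv_cancel h0 hx]

lemma exists_eq_smul_add_smul_of_restrict_eq_smul [IsProbabilityMeasure μ]
    [IsProbabilityMeasure ν] {s : Set X} (hs : MeasurableSet s) {c : ℝ≥0∞}
    (h : μ.restrict s = c • ν) :
    ∃ α : ℝ, 0 ≤ α ∧ α ≤ 1 ∧ ∃ ρ : Measure X, ρ s = 0 ∧ (α = 1 ∨ IsProbabilityMeasure ρ) ∧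
      μ = ENNReal.ofReal α • ν + ENNReal.ofReal (1 - α) • ρ := by
  have hc : c = μ s := by simpa using congrArg (· univ) h.symm
  have hcompl : μ.restrict sᶜ = μ sᶜ • μ[|sᶜ] := by
    by_cases h0 : μ sᶜ = 0
    · rw [h0, zero_smul, Measure.restrict_eq_zero.2 h0]
    · rw [ProbabilityTheory.cond, smul_smul,
        ENNReal.mul_inv_cancel h0 (measure_ne_top μ _), one_smul]
  refine ⟨μ.real s, measureReal_nonneg, measureReal_le_one, μ[|sᶜ], ?_, ?_, ?_⟩
  · simp [cond_apply hs.compl]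
  · refine or_iff_not_imp_left.2 fun hα => cond_isProbabilityMeasure ?_
    rwa [Ne, prob_compl_eq_zero_iff hs, ← ENNReal.toReal_eq_one_iff]
  · rw [← probReal_compl_eq_one_sub hs, ofReal_measureReal, ofReal_measureReal, ← hcompl, ← hc,
      ← h, Measure.restrict_add_restrict_compl hs]

end Measures

section InvariantMeasures

variable {X : Type*} [MeasurableSpace X] {κ : Kernel X X} {μ ν ρ : Measure X}

lemma invariant_smul (hμ : κ.Invariant μ) (c : ℝ≥0∞) : κ.Invariant (c • μ) := by
  rw [Kernel.Invariant, Measure.comp_smul, hμ.def]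

lemma le_of_invariant_of_forall_le [IsProbabilityMeasure μ] (hμ : κ.Invariant μ)
    (hκ : ∀ x, κ x ≤ ρ) : μ ≤ ρ := by
  refine Measure.le_iff.2 fun s hs => ?_
  calc μ s = ∫⁻ x, κ x s ∂μ := by
        conv_lhs => rw [← hμ.def]
        exact Measure.bind_apply hs κ.aemeasurable
    _ ≤ ∫⁻ _, ρ s ∂μ := lintegral_mono fun x => hκ x s
    _ = ρ s := by simp

lemma absolutelyContinuous_of_invariant (hμ : κ.Invariant μ) (hμ0 : μ ≠ 0)
    (hκ : ∀ x, ρ ≪ κ x) : ρ ≪ μ := by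
  have hconst : ρ ≪ Kernel.const X ρ ∘ₘ μ := by
    rw [Measure.const_comp]
    exact Measure.absolutelyContinuous_smul (by simpa using hμ0)
  rw [← hμ.def]
  exact hconst.trans (Measure.AbsolutelyContinuous.comp_left μ (ae_of_all _ hκ))

-- `μ = κ ∘ₘ μ ≤ κ ∘ₘ (μ - ν) + ν` gives `μ - ν ≤ κ ∘ₘ (μ - ν)`, and both have the same mass.
lemma invariant_sub [IsMarkovKernel κ] [IsFiniteMeasure μ] [IsFiniteMeasure ν]
    (hμ : κ.Invariant μ) (hν : κ.Invariant ν) : κ.Invariant (μ - ν) := by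
  have hle : μ - ν ≤ κ ∘ₘ (μ - ν) := by
    refine Measure.sub_le_of_le_add ?_
    calc μ = κ ∘ₘ μ := hμ.def.symm
      _ ≤ κ ∘ₘ (μ - ν + ν) := Measure.le_iff.2 fun s hs => by
        simp only [Measure.bind_apply hs κ.aemeasurable]
        exact lintegral_mono' (measure_le_sub_add μ ν) le_rfl
      _ = κ ∘ₘ (μ - ν) + ν := by rw [Measure.comp_add, hν.def]
  exact (Measure.eq_of_le_of_measure_univ_eq hle Measure.comp_apply_univ.symm).symm

-- `μ - ν` and `ν - μ` are invariant and mutually singular, but nonzero invariant measures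
-- both dominate `ρ`.
theorem eq_of_invariant_of_measure_univ_eq [IsMarkovKernel κ] [IsFiniteMeasure μ]
    [IsFiniteMeasure ν] [NeZero ρ] (hκ : ∀ x, ρ ≪ κ x) (hμ : κ.Invariant μ) (hν : κ.Invariant ν)
    (hmass : μ univ = ν univ) : μ = ν := by
  have le_of_sub_eq_zero {μ₁ μ₂ : Measure X} [IsFiniteMeasure μ₁] [IsFiniteMeasure μ₂]
      (h : μ₁ - μ₂ = 0) : μ₁ ≤ μ₂ := by
    simpa [h] using measure_le_sub_add μ₁ μ₂
  by_cases hpos : μ - ν = 0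
  · exact Measure.eq_of_le_of_measure_univ_eq (le_of_sub_eq_zero hpos) hmass
  by_cases hneg : ν - μ = 0
  · exact (Measure.eq_of_le_of_measure_univ_eq (le_of_sub_eq_zero hneg) hmass.symm).symm
  have hρ : ρ ⟂ₘ ρ := Measure.mutually_singular_measure_sub.mono_ac
    (absolutelyContinuous_of_invariant (invariant_sub hμ hν) hpos hκ)
    (absolutelyContinuous_of_invariant (invariant_sub hν hμ) hneg hκ)
  exact absurd ((Measure.MutuallySingular.self_iff ρ).1 hρ) (NeZero.ne ρ)

lemma eq_measure_univ_smul_of_invariant [IsMarkovKernel κ] [IsProbabilityMeasure μ]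
    [IsFiniteMeasure ν] [NeZero ρ] (hκ : ∀ x, ρ ≪ κ x) (hμ : κ.Invariant μ) (hν : κ.Invariant ν) :
    ν = ν univ • μ :=
  have := Measure.smul_finite μ (measure_ne_top ν univ)
  eq_of_invariant_of_measure_univ_eq hκ hν (invariant_smul hμ _) (by simp)

end InvariantMeasures

section Entropy

lemma PsiE_eq_zero_iff {a : ℝ≥0∞} : PsiE a = 0 ↔ a = 1 := by
  by_cases ha : a = ∞
  · simp [PsiE, ha]
  have hklFun : PsiE a = ENNReal.ofReal (InformationTheory.klFun a.toReal) := by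
    rw [PsiE, if_neg ha, InformationTheory.klFun_apply]
    ring_nf
  rw [hklFun, ENNReal.ofReal_eq_zero,
    (InformationTheory.klFun_nonneg ENNReal.toReal_nonneg).ge_iff_eq',
    InformationTheory.klFun_eq_zero_iff ENNReal.toReal_nonneg, ENNReal.toReal_eq_one_iff]

lemma measurable_PsiE : Measurable PsiE :=
  Measurable.ite (measurableSet_singleton _) measurable_const (by fun_prop)

lemma lintegral_PsiE_rnDeriv_eq_zero_iff {X : Type*} [MeasurableSpace X] {μ ν : Measure X}
    [SFinite μ] [SigmaFinite ν] (h : μ ≪ ν) :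
    ∫⁻ x, PsiE (μ.rnDeriv ν x) ∂ν = 0 ↔ μ = ν := by
  rw [lintegral_eq_zero_iff (measurable_PsiE.fun_comp (Measure.measurable_rnDeriv μ ν)),
    ← Measure.rnDeriv_eq_one_iff_eq h]
  exact eventually_congr (ae_of_all _ fun x => PsiE_eq_zero_iff)

end Entropy

namespace ChainSetting

variable {X : Type*} [MeasurableSpace X] [TopologicalSpace X] (S : ChainSetting X)

/-- The measure `r(x) μ(dx)`, the first marginal of `μ(dx) c(x,dy)`. -/
def exitMeas (μ : Measure X) : Measure X := μ.withDensity fun x => ENNReal.ofReal (S.r x)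

variable {μ ν π₀ : Measure X}

instance [SFinite μ] : SFinite (S.exitMeas μ) := inferInstanceAs (SFinite (μ.withDensity _))

instance [SigmaFinite μ] : SigmaFinite (S.muc μ) := SigmaFinite.withDensity_ofReal _

lemma exitMeas_eq_zero (hν : ν S.E0ᶜ = 0) : S.exitMeas ν = 0 := by
  have hr : (fun x => ENNReal.ofReal (S.r x)) =ᵐ[ν] 0 := by
    filter_upwards [show ∀ᵐ x ∂ν, S.r x = 0 from hν] with x hx
    simp [hx]
  rw [exitMeas, withDensity_congr_ae hr, withDensity_zero]

lemma exitMeas_smul_add_smul (hν : ν S.E0ᶜ = 0) (a b : ℝ≥0∞) :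
    S.exitMeas (a • μ + b • ν) = a • S.exitMeas μ := by
  have hbν : (b • ν) S.E0ᶜ = 0 := by simp [hν]
  rw [exitMeas, withDensity_add_measure, withDensity_smul_measure, ← exitMeas, ← exitMeas,
    S.exitMeas_eq_zero hbν, add_zero]

variable [OpensMeasurableSpace X]

lemma measurable_ofReal_r : Measurable fun x => ENNReal.ofReal (S.r x) :=
  S.r_cont.measurable.ennreal_ofReal

lemma restrict_E0_compl (μ : Measure X) :
    μ.restrict S.E0ᶜ = (S.exitMeas μ).withDensity fun x => (ENNReal.ofReal (S.r x))⁻¹ := by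
  rw [exitMeas, withDensity_withDensity_inv S.measurable_ofReal_r
    (ae_of_all _ fun _ => ENNReal.ofReal_ne_top)]
  congr 1
  ext x
  simp [E0, (S.r_nonneg x).lt_iff_ne', eq_comm]

lemma lintegral_inv_r_ne_zero (μ : Measure X) [NeZero μ] :
    ∫⁻ x, (ENNReal.ofReal (S.r x))⁻¹ ∂μ ≠ 0 := by
  have hsupport : Function.support (fun x => (ENNReal.ofReal (S.r x))⁻¹) = univ :=
    eq_univ_of_forall fun x => ENNReal.inv_ne_zero.2 ENNReal.ofReal_ne_top
  rw [← pos_iff_ne_zero, lintegral_pos_iff_support S.measurable_ofReal_r.fun_inv, hsupport]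
  exact NeZero.pos (μ univ)

lemma isProbabilityMeasure_piMeas [NeZero π₀]
    (hfin : ∫⁻ x, (ENNReal.ofReal (S.r x))⁻¹ ∂π₀ ≠ ∞) : IsProbabilityMeasure (S.piMeas π₀) := ⟨by
  rw [piMeas, Measure.smul_apply, withDensity_apply _ MeasurableSet.univ, Measure.restrict_univ,
    smul_eq_mul, ENNReal.inv_mul_cancel (S.lintegral_inv_r_ne_zero π₀) hfin]⟩

lemma withDensity_inv_r [NeZero π₀] (hfin : ∫⁻ x, (ENNReal.ofReal (S.r x))⁻¹ ∂π₀ ≠ ∞) :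
    π₀.withDensity (fun x => (ENNReal.ofReal (S.r x))⁻¹) =
      (∫⁻ x, (ENNReal.ofReal (S.r x))⁻¹ ∂π₀) • S.piMeas π₀ := by
  rw [piMeas, smul_smul, ENNReal.mul_inv_cancel (S.lintegral_inv_r_ne_zero π₀) hfin, one_smul]

lemma exitMeas_piMeas (hfin : ∫⁻ x, (ENNReal.ofReal (S.r x))⁻¹ ∂π₀ ≠ ∞) :
    S.exitMeas (S.piMeas π₀) = (∫⁻ x, (ENNReal.ofReal (S.r x))⁻¹ ∂π₀)⁻¹ • π₀ := by
  have hfinite : ∀ᵐ x ∂π₀, (ENNReal.ofReal (S.r x))⁻¹ ≠ ∞ :=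
    (ae_lt_top S.measurable_ofReal_r.fun_inv hfin).mono fun _ => LT.lt.ne
  have hcancel := withDensity_inv_same S.measurable_ofReal_r.fun_inv
    (ae_of_all π₀ fun x => ENNReal.inv_ne_zero.2 ENNReal.ofReal_ne_top) hfinite
  simp only [inv_inv] at hcancel
  rw [exitMeas, piMeas, withDensity_smul_measure, hcancel]

variable [SecondCountableTopology X]

/-- The skeleton transition probabilities `p(x,dy)` as a kernel. -/
def skelKernel : Kernel X X :=
  (Kernel.const X S.lam).withDensity fun x y => ENNReal.ofReal (S.p x y)

lemma measurable_ofReal_p : Measurable fun z : X × X => ENNReal.ofReal (S.p z.1 z.2) :=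
  S.p_cont.measurable.ennreal_ofReal

lemma skelKernel_apply (x : X) : S.skelKernel x = S.skel x := by
  rw [skelKernel, Kernel.withDensity_apply _ S.measurable_ofReal_p, Kernel.const_apply, skel]

instance : IsMarkovKernel S.skelKernel where
  isProbabilityMeasure x := ⟨by
    rw [skelKernel_apply, skel, withDensity_apply _ MeasurableSet.univ, Measure.restrict_univ,
      ← ofReal_integral_eq_lintegral_ofReal (integrable_of_integral_eq_one (S.p_int x))
        (ae_of_all _ fun y => (S.p_pos x y).le), S.p_int, ENNReal.ofReal_one]⟩

lemma invariant_skelKernel_iff :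
    S.skelKernel.Invariant μ ↔ ∀ s, MeasurableSet s → ∫⁻ x, S.skel x s ∂μ = μ s := by
  rw [Kernel.Invariant, Measure.ext_iff]
  refine forall₂_congr fun s hs => ?_
  simp only [Measure.bind_apply hs S.skelKernel.aemeasurable, skelKernel_apply]

lemma lam_absolutelyContinuous_skelKernel (x : X) : S.lam ≪ S.skelKernel x := by
  rw [skelKernel_apply]
  exact withDensity_absolutelyContinuous'
    (S.measurable_ofReal_p.comp measurable_prodMk_left).aemeasurable
    (ae_of_all _ fun y => (ENNReal.ofReal_pos.2 (S.p_pos x y)).ne')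

lemma muc_eq_compProd (μ : Measure X) [SFinite μ] :
    S.muc μ = S.exitMeas μ ⊗ₘ S.skelKernel := by
  have : IsSFiniteKernel ((Kernel.const X S.lam).withDensity
    fun x y => ENNReal.ofReal (S.p x y)) := inferInstanceAs (IsSFiniteKernel S.skelKernel)
  rw [skelKernel, Measure.compProd_withDensity S.measurable_ofReal_p, Measure.compProd_const,
    exitMeas, prod_withDensity_left S.measurable_ofReal_r,
    ← withDensity_mul _ (S.measurable_ofReal_r.fun_comp measurable_fst) S.measurable_ofReal_p, muc]
  simp only [ENNReal.ofReal_mul (S.r_nonneg _)]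
  rfl

lemma fst_muc (μ : Measure X) [SFinite μ] : (S.muc μ).fst = S.exitMeas μ := by
  rw [muc_eq_compProd, Measure.fst_compProd]

lemma fst_muc_eq_snd_muc_iff [SFinite μ] :
    (S.muc μ).fst = (S.muc μ).snd ↔ S.skelKernel.Invariant (S.exitMeas μ) := by
  rw [fst_muc, muc_eq_compProd, Measure.snd_compProd, Kernel.Invariant, eq_comm]

lemma rateI0_eq_zero_iff [SigmaFinite μ] {Q : Measure (X × X)} [SFinite Q] :
    S.rateI0 μ Q = 0 ↔ S.skelKernel.Invariant (S.exitMeas μ) ∧ Q = S.muc μ := by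
  rw [rateI0, ← fst_muc_eq_snd_muc_iff]
  constructor
  · intro h
    split_ifs at h with hQ
    · obtain rfl := (lintegral_PsiE_rnDeriv_eq_zero_iff hQ.2).1 h
      exact ⟨hQ.1, rfl⟩
    · exact absurd h ENNReal.top_ne_zero
  · rintro ⟨hmarg, rfl⟩
    have hac : S.muc μ ≪ S.muc μ := Measure.AbsolutelyContinuous.rfl
    rw [if_pos ⟨hmarg, hac⟩, (lintegral_PsiE_rnDeriv_eq_zero_iff hac).2 rfl]

lemma muc_eq_smul_of_eq_smul_add_smul [SFinite μ] {π : Measure X} [SFinite π] {a b : ℝ≥0∞}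
    (hν : ν S.E0ᶜ = 0) (h : μ = a • π + b • ν) : S.muc μ = a • S.muc π := by
  rw [muc_eq_compProd, muc_eq_compProd, h, S.exitMeas_smul_add_smul hν,
    Measure.compProd_smul_left]

lemma exists_eq_smul_piMeas_add_smul [IsProbabilityMeasure π₀] [IsProbabilityMeasure μ]
    (hfin : ∫⁻ x, (ENNReal.ofReal (S.r x))⁻¹ ∂π₀ ≠ ∞) [IsFiniteMeasure (S.exitMeas μ)]
    (hπ₀ : S.skelKernel.Invariant π₀) (hμ : S.skelKernel.Invariant (S.exitMeas μ)) :
    ∃ α : ℝ, 0 ≤ α ∧ α ≤ 1 ∧ ∃ ν : Measure X, ν S.E0ᶜ = 0 ∧ (α = 1 ∨ IsProbabilityMeasure ν) ∧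
      μ = ENNReal.ofReal α • S.piMeas π₀ + ENNReal.ofReal (1 - α) • ν := by
  have := S.isProbabilityMeasure_piMeas hfin
  have hE0 : MeasurableSet S.E0 := S.r_cont.measurable (measurableSet_singleton 0)
  refine exists_eq_smul_add_smul_of_restrict_eq_smul hE0.compl
    (c := S.exitMeas μ univ * ∫⁻ x, (ENNReal.ofReal (S.r x))⁻¹ ∂π₀) ?_
  have hunique := eq_measure_univ_smul_of_invariant S.lam_absolutelyContinuous_skelKernel hπ₀ hμ
  rw [restrict_E0_compl, hunique, withDensity_smul_measure, S.withDensity_inv_r hfin, smul_smul]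
  simp

lemma lintegral_inv_r_ne_top_of_compactSpace [CompactSpace X] [IsProbabilityMeasure π₀]
    (hπ₀ : S.skelKernel.Invariant π₀) : ∫⁻ x, (ENNReal.ofReal (S.r x))⁻¹ ∂π₀ ≠ ∞ := by
  obtain ⟨C, hC⟩ := (isCompact_range S.p_cont).bddAbove
  have hle : π₀ ≤ ENNReal.ofReal C • S.lam := by
    refine le_of_invariant_of_forall_le hπ₀ fun x => ?_
    rw [skelKernel_apply, skel, ← withDensity_const]
    exact withDensity_mono
      (ae_of_all _ fun y => ENNReal.ofReal_le_ofReal (hC (mem_range_self (x, y))))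
  refine ne_top_of_le_ne_top ?_ (lintegral_mono' hle le_rfl)
  rw [lintegral_smul_measure]
  exact ENNReal.mul_ne_top ENNReal.ofReal_ne_top S.inv_r_int

end ChainSetting

theorem rateI_zero_level_set_general {X : Type*} [MeasurableSpace X] [TopologicalSpace X]
    [SecondCountableTopology X] [OpensMeasurableSpace X] (S : ChainSetting X)
    (π₀ : Measure X) [IsProbabilityMeasure π₀]
    (hπ₀inv : ∀ s : Set X, MeasurableSet s → ∫⁻ x, S.skel x s ∂π₀ = π₀ s)
    (hfin : ∫⁻ x, (ENNReal.ofReal (S.r x))⁻¹ ∂π₀ ≠ ∞) :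
    (S.muc (S.piMeas π₀)).fst = (S.muc (S.piMeas π₀)).snd ∧
    S.rateI0 (S.piMeas π₀) (S.muc (S.piMeas π₀)) = 0 ∧
    (∀ ν : Measure X, IsProbabilityMeasure ν → ν S.E0ᶜ = 0 → S.rateI0 ν 0 = 0) ∧
    (∀ (μ : Measure X) (Q : Measure (X × X)),
      IsProbabilityMeasure μ → IsFiniteMeasure Q →
      (S.rateI0 μ Q = 0 ↔
        ∃ α : ℝ, 0 ≤ α ∧ α ≤ 1 ∧ ∃ ν : Measure X, ν S.E0ᶜ = 0 ∧
          (α = 1 ∨ IsProbabilityMeasure ν) ∧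
          μ = ENNReal.ofReal α • S.piMeas π₀ + ENNReal.ofReal (1 - α) • ν ∧
          Q = ENNReal.ofReal α • S.muc (S.piMeas π₀))) := by
  have hinv := S.invariant_skelKernel_iff.2 hπ₀inv
  have := S.isProbabilityMeasure_piMeas hfin
  have hinvπ : S.skelKernel.Invariant (S.exitMeas (S.piMeas π₀)) := by
    rw [S.exitMeas_piMeas hfin]
    exact invariant_smul hinv _
  refine ⟨S.fst_muc_eq_snd_muc_iff.2 hinvπ, S.rateI0_eq_zero_iff.2 ⟨hinvπ, rfl⟩,
    fun ν _ hν => ?_, fun μ Q _ _ => S.rateI0_eq_zero_iff.trans ⟨?_, ?_⟩⟩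
  · rw [S.rateI0_eq_zero_iff, S.muc_eq_compProd, S.exitMeas_eq_zero hν]
    simp [Kernel.Invariant]
  · rintro ⟨hμ, rfl⟩
    have : IsFiniteMeasure (S.exitMeas μ) := S.fst_muc μ ▸ inferInstance
    obtain ⟨α, hα0, hα1, ν, hν, hprob, hμeq⟩ := S.exists_eq_smul_piMeas_add_smul hfin hinv hμ
    exact ⟨α, hα0, hα1, ν, hν, hprob, hμeq, S.muc_eq_smul_of_eq_smul_add_smul hν hμeq⟩
  · rintro ⟨α, -, -, ν, hν, -, hμeq, rfl⟩
    refine ⟨?_, (S.muc_eq_smul_of_eq_smul_add_smul hν hμeq).symm⟩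
    rw [hμeq, S.exitMeas_smul_add_smul hν]
    exact invariant_smul hinvπ _

/-- The zero level set of the rate function `I`: with `Q^π(dx,dy) = π(dx)c(x,dy)` one has
`Q^π` with equal marginals and `I(π,Q^π) = 0`; any probability `ν` supported on a subset of
`E₀` satisfies `I(ν,0) = 0`; and the zeros of `I` are exactly the convex combinations
`α(π,Q^π) + (1-α)(ν,0)`, `α ∈ [0,1]`, with `ν` a probability supported on a subset of
`E₀`. -/
theorem rateI_zero_level_set (S : ChainSetting E)
    (π₀ : Measure E) (hπ₀ : IsProbabilityMeasure π₀)
    (hπ₀inv : ∀ s : Set E, MeasurableSet s → ∫⁻ x, S.skel x s ∂π₀ = π₀ s) :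
    (S.muc (S.piMeas π₀)).fst = (S.muc (S.piMeas π₀)).snd ∧
    S.rateI0 (S.piMeas π₀) (S.muc (S.piMeas π₀)) = 0 ∧
    (∀ ν : Measure E, IsProbabilityMeasure ν → ν S.E0ᶜ = 0 → S.rateI0 ν 0 = 0) ∧
    (∀ (μ : Measure E) (Q : Measure (E × E)),
      IsProbabilityMeasure μ → IsFiniteMeasure Q →
      (S.rateI0 μ Q = 0 ↔
        ∃ α : ℝ, 0 ≤ α ∧ α ≤ 1 ∧ ∃ ν : Measure E, ν S.E0ᶜ = 0 ∧
          (α = 1 ∨ IsProbabilityMeasure ν) ∧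
          μ = ENNReal.ofReal α • S.piMeas π₀ + ENNReal.ofReal (1 - α) • ν ∧
          Q = ENNReal.ofReal α • S.muc (S.piMeas π₀))) :=
  rateI_zero_level_set_general S π₀ hπ₀inv
    (S.lintegral_inv_r_ne_top_of_compactSpace (S.invariant_skelKernel_iff.2 hπ₀inv))

end
end
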